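/- Let φ: [0,1] → ℝ be continuous and differentiable on (0,1), and assume the Löwner representation hypothesis with b > 0: a ∈ ℝ and μ is a Borel probability measure on [−1,1] such that φ'(x) = a + b ∫_{[−1,1]} (2x−1)/(1−λ(2x−1)) dμ(λ) for every x ∈ (0,1). Then ∫_{[1/2,1]} (−ln(1−λ)) dμ(λ) < ∞ and ∫_{[−1,−1/2]} (−ln(1+λ)) dμ(λ) < ∞. -/

import Mathlib

/-!
On `[1/2, 1]`, with `t = 2x - 1 ∈ [0, 1]`, the Löwner kernel `t / (1 - l t)` is nonnegative for all
`l ∈ [-1, 1]`, so `φ(x) - a x` is monotone there. Since it is continuous up to the endpoint `1`, its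
derivative `b ∫ t / (1 - l t) dμ(l)` is integrable over `(1/2, 1)`, and Tonelli's theorem shows that
`l ↦ ∫_{1/2}^1 t / (1 - l t) dx` has finite `μ`-integral. By
`t / (1 - l t) ≥ l / (1 - l t) - 1`, the inner integral is at least `(-log (1 - l) - 1) / 2`
(`neg_log_le_lintegral_kernel`), which bounds the logarithmic integral.

The claim at `-1` is the same argument for the reflected function `x ↦ φ(1 - x)`; to treat both
endpoints at once, `lintegral_neg_log_lt_top` has the parameter `l` enter through a function `f l`
with values in `[-1, 1]`, used for `f l = l` and `f l = -l`.
-/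

open MeasureTheory

open Set

lemma one_sub_mul_pos {l x : ℝ} (hl : l ∈ Icc (-1:ℝ) 1) (hx : x ∈ Ioo (1/2:ℝ) 1) :
    0 < 1 - l * (2*x - 1) := by
  obtain ⟨h1, h2⟩ := hl
  obtain ⟨h3, h4⟩ := hx
  nlinarith

/-- At `l = 1` the left-hand side is `0` by the convention `Real.log 0 = 0`. -/
lemma neg_log_le_lintegral_kernel {l : ℝ} (hl : l ∈ Icc (-1:ℝ) 1) :
    ENNReal.ofReal (-Real.log (1 - l)) ≤
      2 * (∫⁻ x in Ioo (1/2:ℝ) 1, ENNReal.ofReal ((2*x - 1) / (1 - l * (2*x - 1)))) + 1 := by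
  rcases eq_or_lt_of_le hl.2 with rfl | hlt
  · simp
  have hpos : ∀ x ∈ Icc (1/2:ℝ) 1, 0 < 1 - l * (2*x - 1) := by
    rintro x ⟨h3, h4⟩
    nlinarith [hl.1]
  have hcont : ContinuousOn (fun x : ℝ => l / (1 - l * (2*x - 1)) - 1) (Icc (1/2:ℝ) 1) := by
    refine ContinuousOn.sub (ContinuousOn.div (by fun_prop) (by fun_prop) ?_) (by fun_prop)
    exact fun x hx => (hpos x hx).ne'
  have hint : IntegrableOn (fun x : ℝ => l / (1 - l * (2*x - 1)) - 1) (Ioo (1/2:ℝ) 1) :=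
    hcont.integrableOn_Icc.mono_set Ioo_subset_Icc_self
  have hval : ∫ x in Ioo (1/2:ℝ) 1, (l / (1 - l * (2*x - 1)) - 1)
      = -Real.log (1 - l) / 2 - 1/2 := by
    rw [← integral_Ioc_eq_integral_Ioo,
      ← intervalIntegral.integral_of_le (by norm_num : (1/2:ℝ) ≤ 1)]
    rw [intervalIntegral.integral_eq_sub_of_hasDerivAt
      (f := fun x : ℝ => -Real.log (1 - l * (2*x - 1)) / 2 - x)]
    · norm_num
      ring
    · intro x hx
      rw [uIcc_of_le (by norm_num)] at hx
      have h1 : HasDerivAt (fun x : ℝ => 1 - l * (2*x - 1)) (-(l * (2 * 1))) x :=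
        ((((hasDerivAt_id' x).const_mul 2).sub_const 1).const_mul l).const_sub 1
      refine HasDerivAt.congr_deriv
        (((h1.log (hpos x hx).ne').fun_neg.div_const 2).fun_sub (hasDerivAt_id' x)) ?_
      ring
    · apply ContinuousOn.intervalIntegrable
      rwa [uIcc_of_le (by norm_num)]
  have hle : ENNReal.ofReal (-Real.log (1 - l) / 2 - 1/2) ≤
      ∫⁻ x in Ioo (1/2:ℝ) 1, ENNReal.ofReal ((2*x - 1) / (1 - l * (2*x - 1))) := by
    rw [← hval]
    have hmax := ofReal_integral_eq_lintegral_ofReal hint.pos_part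
      (.of_forall fun x => le_max_right _ _)
    refine (ENNReal.ofReal_le_ofReal
      (integral_mono hint hint.pos_part fun x => le_max_left _ _)).trans (hmax.trans_le ?_)
    simp only [ENNReal.ofReal_max, ENNReal.ofReal_zero,
      max_eq_left (zero_le (a := ENNReal.ofReal _))]
    refine setLIntegral_mono' measurableSet_Ioo fun x hx => ENNReal.ofReal_le_ofReal ?_
    have hp := one_sub_mul_pos hl hx
    rw [div_sub_one hp.ne']
    refine div_le_div_of_nonneg_right ?_ hp.le
    -- the inequality of numerators is `(1 - l) (1 + t) ≥ 0` with `t = 2x - 1`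
    nlinarith [mul_nonneg (sub_nonneg.2 hl.2) (le_of_lt (lt_trans (by norm_num) hx.1) : 0 ≤ x)]
  calc ENNReal.ofReal (-Real.log (1 - l))
      = ENNReal.ofReal (2 * (-Real.log (1 - l) / 2 - 1/2) + 1) := by congr 1; ring
    _ ≤ ENNReal.ofReal (2 * (-Real.log (1 - l) / 2 - 1/2)) + ENNReal.ofReal 1 :=
        ENNReal.ofReal_add_le
    _ = 2 * ENNReal.ofReal (-Real.log (1 - l) / 2 - 1/2) + 1 := by
        rw [ENNReal.ofReal_mul (by norm_num)]; simp
    _ ≤ _ := by gcongr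

/-- The one-sided statement at the endpoint `1`, for a finite measure `ν` and a parameter
`f l ∈ [-1, 1]`; only the representation of the derivative on `(1/2, 1)` matters. -/
lemma lintegral_neg_log_lt_top {ν : Measure ℝ} [IsFiniteMeasure ν] {f : ℝ → ℝ} (hf : Measurable f)
    (hfν : ∀ᵐ l ∂ν, f l ∈ Icc (-1:ℝ) 1) {ψ ψ' : ℝ → ℝ} {a b : ℝ} (hb : 0 < b)
    (hc : ContinuousOn ψ (Icc (1/2:ℝ) 1))
    (hd : ∀ x ∈ Ioo (1/2:ℝ) 1, HasDerivAt ψ (ψ' x) x)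
    (hrep : ∀ x ∈ Ioo (1/2:ℝ) 1,
      ψ' x = a + b * ∫ l, (2*x - 1) / (1 - f l * (2*x - 1)) ∂ν) :
    ∫⁻ l, ENNReal.ofReal (-Real.log (1 - f l)) ∂ν < ⊤ := by
  set K : ℝ → ℝ → ℝ := fun x l => (2*x - 1) / (1 - f l * (2*x - 1)) with hK
  have hKm : Measurable (Function.uncurry K) := by
    simp only [hK, Function.uncurry_def]
    fun_prop
  have hKpos : ∀ x ∈ Ioo (1/2:ℝ) 1, ∀ᵐ l ∂ν, 0 ≤ K x l := fun x hx => by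
    filter_upwards [hfν] with l hl
    exact div_nonneg (by linarith [hx.1]) (one_sub_mul_pos hl hx).le
  have hKint : ∀ x ∈ Ioo (1/2:ℝ) 1, Integrable (K x) ν := fun x hx => by
    refine Integrable.of_bound (C := 1 / (1 - (2*x - 1)))
      (hKm.comp measurable_prodMk_left).aestronglyMeasurable ?_
    filter_upwards [hfν, hKpos x hx] with l hl h0
    rw [Real.norm_of_nonneg h0]
    have h1 := hx.1
    have h2 := hx.2
    refine div_le_div₀ zero_le_one (by linarith) (by linarith) ?_
    nlinarith [hl.2]
  have hInt : IntegrableOn (fun x => b * ∫ l, K x l ∂ν) (Ioo (1/2:ℝ) 1) := by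
    refine IntegrableOn.mono_set ?_ Ioo_subset_Ioc_self
    refine intervalIntegral.integrableOn_deriv_of_nonneg (g := fun x => ψ x - a * x)
      (hc.sub (by fun_prop)) (fun x hx => ?_)
      (fun x hx => mul_nonneg hb.le (integral_nonneg_of_ae (hKpos x hx)))
    refine ((hd x hx).fun_sub ((hasDerivAt_id' x).const_mul a)).congr_deriv ?_
    rw [hrep x hx]
    ring
  have hInt' : IntegrableOn (fun x => ∫ l, K x l ∂ν) (Ioo (1/2:ℝ) 1) := by
    simpa [hb.ne', IntegrableOn] using hInt.const_mul b⁻¹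
  have hfin : ∫⁻ l, (∫⁻ x in Ioo (1/2:ℝ) 1, ENNReal.ofReal (K x l)) ∂ν < ⊤ := by
    rw [← lintegral_lintegral_swap hKm.ennreal_ofReal.aemeasurable]
    refine lt_of_eq_of_lt (setLIntegral_congr_fun measurableSet_Ioo fun x hx => ?_)
      hInt'.lintegral_lt_top
    exact (ofReal_integral_eq_lintegral_ofReal (hKint x hx) (hKpos x hx)).symm
  calc ∫⁻ l, ENNReal.ofReal (-Real.log (1 - f l)) ∂ν
      ≤ ∫⁻ l, (2 * (∫⁻ x in Ioo (1/2:ℝ) 1, ENNReal.ofReal (K x l)) + 1) ∂ν :=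
        lintegral_mono_ae (by
          filter_upwards [hfν] with l hl using neg_log_le_lintegral_kernel hl)
    _ = 2 * (∫⁻ l, (∫⁻ x in Ioo (1/2:ℝ) 1, ENNReal.ofReal (K x l)) ∂ν) + ν univ := by
        rw [lintegral_add_right _ measurable_const, lintegral_const_mul' _ _ (by simp),
          lintegral_const, one_mul]
    _ < ⊤ := ENNReal.add_lt_top.2
        ⟨ENNReal.mul_lt_top (by simp) hfin, measure_lt_top _ _⟩



/-- If `φ` is continuous on `[0,1]`, differentiable on `(0,1)`, and its derivative `φ'`
admits a Löwner representation with `b > 0` and `μ` a Borel probability measure on `[−1,1]`,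
then `∫_{[1/2,1]} (−ln(1−λ)) dμ(λ) < ∞` and `∫_{[−1,−1/2]} (−ln(1+λ)) dμ(λ) < ∞`. -/
theorem log_integrable_of_loewner_rep
    (φ φ' : ℝ → ℝ) (a b : ℝ) (μ : Measure ℝ) [IsProbabilityMeasure μ]
    (hφc : ContinuousOn φ (Set.Icc (0:ℝ) 1))
    (hφd : ∀ x ∈ Set.Ioo (0:ℝ) 1, HasDerivAt φ (φ' x) x)
    (hb : 0 < b)
    (hμsupp : μ (Set.Icc (-1:ℝ) 1)ᶜ = 0)
    (hrep : ∀ x ∈ Set.Ioo (0:ℝ) 1,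
      φ' x = a + b * ∫ l in Set.Icc (-1:ℝ) 1, (2*x - 1) / (1 - l*(2*x - 1)) ∂μ) :
    (∫⁻ l in Set.Icc (1/2:ℝ) 1, ENNReal.ofReal (-Real.log (1 - l)) ∂μ) < ⊤ ∧
    (∫⁻ l in Set.Icc (-1:ℝ) (-1/2), ENNReal.ofReal (-Real.log (1 + l)) ∂μ) < ⊤ := by
  have hae : ∀ᵐ l ∂(μ.restrict (Icc (-1:ℝ) 1)), l ∈ Icc (-1:ℝ) 1 :=
    ae_restrict_mem measurableSet_Icc
  have hsub : Ioo (1/2:ℝ) 1 ⊆ Ioo 0 1 := Ioo_subset_Ioo_left (by norm_num)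
  constructor
  · refine lt_of_le_of_lt (lintegral_mono_set (t := Icc (-1:ℝ) 1) (Icc_subset_Icc_left (by norm_num))) ?_
    exact lintegral_neg_log_lt_top measurable_id hae hb
      (hφc.mono (Icc_subset_Icc_left (by norm_num)))
      (fun x hx => hφd x (hsub hx)) (fun x hx => hrep x (hsub hx))
  · refine lt_of_le_of_lt (lintegral_mono_set (t := Icc (-1:ℝ) 1) (Icc_subset_Icc_right (by norm_num))) ?_
    have h := lintegral_neg_log_lt_top (f := fun l => -l) (ν := μ.restrict (Icc (-1:ℝ) 1))
      (ψ := fun x => φ (1 - x)) (ψ' := fun x => -φ' (1 - x)) (a := -a) measurable_neg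
      (hae.mono fun l hl => ⟨by linarith [hl.2], by linarith [hl.1]⟩) hb
      (hφc.comp (by fun_prop) fun x hx => ⟨by linarith [hx.2], by linarith [hx.1]⟩)
      (fun x hx => by
        have h1 : 1 - x ∈ Ioo (0:ℝ) 1 := ⟨by linarith [hx.2], by linarith [hx.1]⟩
        exact ((hφd _ h1).comp x ((hasDerivAt_id' x).const_sub 1)).congr_deriv (by ring))
      (fun x hx => by
        have h1 : 1 - x ∈ Ioo (0:ℝ) 1 := ⟨by linarith [hx.2], by linarith [hx.1]⟩
        rw [hrep _ h1, neg_add, ← mul_neg, ← integral_neg]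
        congr 2
        refine integral_congr_ae (.of_forall fun l => ?_)
        simp only
        rw [← neg_div]
        congr 1 <;> ring)
    simpa only [sub_neg_eq_add] using h
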